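/- arXiv:1109.0719 — 2 statements merged into one kernel-verified Lean document; each statement's English description precedes it below -/
import Mathlib

section
/- Let k, l be integers with k ≤ l < 2k and k ≥ 1. Then no minimal (k,l)-redundant multigraph G = (V, E) (i.e., G is (k,l)-redundant and every proper subgraph of G is (k,l)-sparse) can be written as the union of two subgraphs G₁ = (V₁, E₁) and G₂ = (V₂, E₂) with |V₁| ≥ 2, |V₂| ≥ 2, V = V₁ ∪ V₂, V₁ ∩ V₂ consisting of exactly one vertex, and E the disjoint union of E₁ and E₂. -/
/-!  Multigraphs: finite vertex set, finite multiset of edges (unordered pairs of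
distinct vertices, parallel edges allowed, loops excluded). -/

/-- A multigraph on vertex type `V`: a finite set of vertices together with a
finite multiset of edges (unordered pairs of vertices). -/
structure MG (V : Type*) where
  verts : Finset V
  edges : Multiset (Sym2 V)

namespace MG

variable {V : Type*} [DecidableEq V]

/-- Well-formedness: no loops, and every edge joins vertices of the graph. -/
def WF (G : MG V) : Prop :=
  (∀ e ∈ G.edges, ¬ e.IsDiag) ∧ (∀ e ∈ G.edges, e ∈ G.verts.sym2)

/-- `G'` is a subgraph of `G`: vertices a subset, edges a sub-multiset, and all
edges of `G'` join vertices of `G'`. -/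
def IsSubgraph (G' G : MG V) : Prop :=
  G'.verts ⊆ G.verts ∧ G'.edges ≤ G.edges ∧ ∀ e ∈ G'.edges, e ∈ G'.verts.sym2

/-- `(k,l)`-sparsity: every subgraph with `n > 1` vertices and `m` edges
satisfies `m ≤ k n - l`. -/
def Sparse (k l : ℤ) (G : MG V) : Prop :=
  ∀ G' : MG V, G'.IsSubgraph G → 1 < G'.verts.card →
    (Multiset.card G'.edges : ℤ) ≤ k * G'.verts.card - l

/-- `(k,l)`-redundant: not `(k,l)`-sparse. -/
def Redundant (k l : ℤ) (G : MG V) : Prop := ¬ Sparse k l G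

/-- `(k,l)`-tight: sparse with exactly `k|V| - l` edges. -/
def Tight (k l : ℤ) (G : MG V) : Prop :=
  Sparse k l G ∧ (Multiset.card G.edges : ℤ) = k * G.verts.card - l

/-- `A` and `B` are `(k,l)`-rigidly connected in `G` if some `(k,l)`-tight
subgraph of `G` contains both. -/
def RigidlyConnected (k l : ℤ) (G : MG V) (A B : V) : Prop :=
  ∃ T : MG V, T.IsSubgraph G ∧ Tight k l T ∧ A ∈ T.verts ∧ B ∈ T.verts

/-- `r_AB(H)`: the maximum of `|E_h| - k |V_h|` over all `(k,l)`-sparse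
subgraphs `h` of `H` containing both `A` and `B`. -/
noncomputable def rAB (k l : ℤ) (H : MG V) (A B : V) : ℤ :=
  sSup {z : ℤ | ∃ h : MG V, h.IsSubgraph H ∧ Sparse k l h ∧
    A ∈ h.verts ∧ B ∈ h.verts ∧ z = (Multiset.card h.edges : ℤ) - k * h.verts.card}

/-- `M_AB(H) = max (r_AB(H) + 2k, 0)`. -/
noncomputable def MAB (k l : ℤ) (H : MG V) (A B : V) : ℤ :=
  max (rAB k l H A B + 2 * k) 0

/-- The subgraph of `G` induced by a set `S` of vertices. -/
def induced (G : MG V) (S : Finset V) : MG V :=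
  ⟨S, G.edges.filter (· ∈ S.sym2)⟩

/-- The intersection of `g` with the subgraph induced by `VH`: vertices
`g.verts ∩ VH` and the edges of `g` with both endpoints in `VH`. -/
def inter (g : MG V) (VH : Finset V) : MG V :=
  ⟨g.verts ∩ VH, g.edges.filter (· ∈ VH.sym2)⟩

/-- The renormalizability condition: every edge of `G` with exactly one
endpoint in `VH` is incident to `A` or `B`. -/
def RenormCond (G : MG V) (VH : Finset V) (A B : V) : Prop :=
  ∀ e ∈ G.edges, (∃ v ∈ e, v ∈ VH) → (∃ v ∈ e, v ∉ VH) → (A ∈ e ∨ B ∈ e)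

/-- The renormalized graph `R(G)`: delete all edges with both endpoints in
`VH`, delete the vertices of `VH` other than `A, B`, and insert
`M_AB(H)` parallel edges between `A` and `B`, where `H` is the subgraph
induced by `VH`. -/
noncomputable def renormG (k l : ℤ) (G : MG V) (VH : Finset V) (A B : V) : MG V :=
  ⟨(G.verts \ VH) ∪ {A, B},
   G.edges.filter (fun e => e ∉ VH.sym2) +
     Multiset.replicate (MAB k l (G.induced VH) A B).toNat s(A, B)⟩

/-- Renormalization of a subgraph `g` of `G`: the part of `g` outside `VH` is
left unchanged, and its intersection `h` with the subgraph induced by `VH` is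
replaced by `M_AB(h)` parallel `A`–`B` edges if both `A` and `B` belong to `g`,
and by no edges otherwise. -/
noncomputable def renormSub (k l : ℤ) (g : MG V) (VH : Finset V) (A B : V) : MG V :=
  ⟨(g.verts \ VH) ∪ (g.verts ∩ {A, B}),
   g.edges.filter (fun e => e ∉ VH.sym2) +
     (if A ∈ g.verts ∧ B ∈ g.verts then
        Multiset.replicate (MAB k l (g.inter VH) A B).toNat s(A, B)
      else 0)⟩

/-- The maximum cardinality of a sub-multiset `E'` of the edges of `G` such
that `(V, E')` is `(k,l)`-sparse. -/
noncomputable def maxSparseCard (k l : ℤ) (G : MG V) : ℕ :=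
  sSup {n : ℕ | ∃ E' : Multiset (Sym2 V), E' ≤ G.edges ∧
    Sparse k l (⟨G.verts, E'⟩ : MG V) ∧ Multiset.card E' = n}

/-- The number of `(k,l)`-redundant edges of `G`. -/
noncomputable def nred (k l : ℤ) (G : MG V) : ℕ :=
  Multiset.card G.edges - maxSparseCard k l G

/-- Connectivity: any two vertices are joined by a path of edges. -/
def Connected (G : MG V) : Prop :=
  ∀ a ∈ G.verts, ∀ b ∈ G.verts,
    Relation.ReflTransGen (fun x y => s(x, y) ∈ G.edges) a b

end MG

/-! If `|E₁| ≤ k|V₁| - l` and `|E₂| ≤ k|V₂| - l`, then inclusion–exclusion on the vertices gives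
`|E| ≤ k|V| - l + (k|V₁ ∩ V₂| - l)`. A minimal redundant graph exceeds its own bound `k|V| - l`, so
two proper subgraphs covering it must have `k|V₁ ∩ V₂| > l`; a single shared vertex is too few. -/

namespace MG

variable {V : Type*} {k l : ℤ} {G H K : MG V}

theorem IsSubgraph.isSubgraph_self (h : H.IsSubgraph G) : H.IsSubgraph H :=
  ⟨Finset.Subset.refl _, le_refl _, h.2.2⟩

theorem IsSubgraph.ne_of_card_inter_lt [DecidableEq V] (hK : K.IsSubgraph G)
    (hcard : (H.verts ∩ K.verts).card < K.verts.card) : H ≠ G := by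
  rintro rfl
  exact hcard.ne (congrArg Finset.card (Finset.inter_eq_right.2 hK.1))

theorem IsSubgraph.card_edges_le_of_minimal
    (hmin : ∀ G' : MG V, G'.IsSubgraph G → G' ≠ G → Sparse k l G')
    (hH : H.IsSubgraph G) (hne : H ≠ G) (hcard : 1 < H.verts.card) :
    (Multiset.card H.edges : ℤ) ≤ k * H.verts.card - l :=
  hmin H hH hne H hH.isSubgraph_self hcard

theorem Redundant.lt_card_edges_of_minimal (hred : Redundant k l G)
    (hmin : ∀ G' : MG V, G'.IsSubgraph G → G' ≠ G → Sparse k l G') :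
    k * G.verts.card - l < Multiset.card G.edges := by
  by_contra! hle
  refine hred fun G' hG' hcard => ?_
  obtain rfl | hne := eq_or_ne G' G
  · exact hle
  · exact hG'.card_edges_le_of_minimal hmin hne hcard

end MG

theorem minimal_redundant_no_one_vertex_decomposition_general {V : Type*} [DecidableEq V]
    {k l : ℤ} {G G₁ G₂ : MG V} (hred : MG.Redundant k l G)
    (hmin : ∀ G' : MG V, G'.IsSubgraph G → G' ≠ G → MG.Sparse k l G')
    (hG₁ : G₁.IsSubgraph G) (hG₂ : G₂.IsSubgraph G) (hne₁ : G₁ ≠ G) (hne₂ : G₂ ≠ G)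
    (hcard₁ : 2 ≤ G₁.verts.card) (hcard₂ : 2 ≤ G₂.verts.card)
    (hverts : G.verts = G₁.verts ∪ G₂.verts) (hedges : G.edges ≤ G₁.edges + G₂.edges) :
    l < k * (G₁.verts ∩ G₂.verts).card := by
  have verts_card : (G.verts.card : ℤ) + (G₁.verts ∩ G₂.verts).card =
      G₁.verts.card + G₂.verts.card := by
    rw [hverts]
    exact_mod_cast Finset.card_union_add_card_inter G₁.verts G₂.verts
  have edges_card : (Multiset.card G.edges : ℤ) ≤
      Multiset.card G₁.edges + Multiset.card G₂.edges := by
    exact_mod_cast (Multiset.card_le_card hedges).trans_eq (Multiset.card_add _ _)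
  have excess : k * G.verts.card - l <
      k * (G.verts.card + (G₁.verts ∩ G₂.verts).card) - 2 * l :=
    calc
      k * G.verts.card - l < Multiset.card G.edges := hred.lt_card_edges_of_minimal hmin
      _ ≤ Multiset.card G₁.edges + Multiset.card G₂.edges := edges_card
      _ ≤ (k * G₁.verts.card - l) + (k * G₂.verts.card - l) :=
        add_le_add (hG₁.card_edges_le_of_minimal hmin hne₁ hcard₁)
          (hG₂.card_edges_le_of_minimal hmin hne₂ hcard₂)
      _ = k * (G.verts.card + (G₁.verts ∩ G₂.verts).card) - 2 * l := by rw [verts_card]; ring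
  linarith

/-- for `k ≤ l < 2k`, `k ≥ 1`, no minimal `(k,l)`-redundant multigraph `G`
can be written as the union of two subgraphs, each with at least two vertices, sharing
exactly one vertex, whose edge multisets partition the edges of `G`. -/
theorem minimal_redundant_no_one_vertex_decomposition {V : Type*} [DecidableEq V]
    (k l : ℤ) (hk : 1 ≤ k) (hkl : k ≤ l) (hl2k : l < 2 * k)
    (G : MG V) (hWF : G.WF) (hred : MG.Redundant k l G)
    (hmin : ∀ G' : MG V, G'.IsSubgraph G → G' ≠ G → MG.Sparse k l G') :
    ¬ ∃ G₁ G₂ : MG V, G₁.IsSubgraph G ∧ G₂.IsSubgraph G ∧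
      2 ≤ G₁.verts.card ∧ 2 ≤ G₂.verts.card ∧
      G.verts = G₁.verts ∪ G₂.verts ∧ (G₁.verts ∩ G₂.verts).card = 1 ∧
      G.edges = G₁.edges + G₂.edges := by
  rintro ⟨G₁, G₂, hG₁, hG₂, hcard₁, hcard₂, hverts, hinter, hedges⟩
  have hne₁ : G₁ ≠ G := hG₂.ne_of_card_inter_lt (by omega)
  have hne₂ : G₂ ≠ G := hG₁.ne_of_card_inter_lt (by rw [Finset.inter_comm]; omega)
  have hlt := minimal_redundant_no_one_vertex_decomposition_general hred hmin hG₁ hG₂ hne₁ hne₂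
    hcard₁ hcard₂ hverts hedges.le
  rw [hinter, Nat.cast_one, mul_one] at hlt
  exact hkl.not_gt hlt
end

section
/- For (k,l) = (2,1), the renormalization formula for redundant edges fails: there exist a multigraph G = (V, E), a subset V_H ⊆ V with distinct vertices A, B ∈ V_H, such that the induced subgraph H = (V_H, E_H) satisfies the renormalizability condition with respect to A, B, H is (2,1)-sparse (so n_red(H) = 0), and yet n_red(G) ≠ n_red(R(G)) + n_red(H), where n_red and R are taken with respect to (k,l) = (2,1). -/
/-!
If `l < k`, two `(k,l)`-tight subgraphs that meet in a single vertex `A` have a redundant union: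
on `n` vertices it has `k n + k - 2 l > k n - l` edges. The parallel edges inserted by the
renormalization only measure subgraphs of `H` containing both `A` and `B`, so a tight part of `H`
attached through `A` alone is forgotten, and with it this redundancy. The smallest tight graphs
are bundles of `2 k - l` parallel edges: take one bundle `A C` inside `H`, where `B` is isolated,
and one bundle `A D` outside.
-/

theorem multiset_filter_replicate {α : Type*} (p : α → Prop) [DecidablePred p] (n : ℕ) (a : α) :
    (Multiset.replicate n a).filter p = Multiset.replicate (if p a then n else 0) a := by
  split_ifs with ha
  · exact Multiset.filter_eq_self.2 fun x hx => Multiset.eq_of_mem_replicate hx ▸ ha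
  · exact Multiset.filter_eq_nil.2 fun x hx => Multiset.eq_of_mem_replicate hx ▸ ha

namespace MG

section Sparsity

variable {V : Type*} {k l : ℤ}

theorem sparse_edgeless (hk : 0 ≤ k) (hl : l ≤ 2 * k) (S : Finset V) :
    Sparse k l (⟨S, 0⟩ : MG V) := by
  rintro G' ⟨-, hedges, -⟩ hcard
  have hedgeless : G'.edges = 0 := Multiset.le_zero.1 hedges
  have hverts : (2 : ℤ) ≤ G'.verts.card := mod_cast hcard
  calc (G'.edges.card : ℤ) = 0 := by simp [hedgeless]
    _ ≤ k * 2 - l := by linarith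
    _ ≤ k * G'.verts.card - l := by gcongr

theorem bddAbove_sparse_card (k l : ℤ) (G : MG V) :
    BddAbove {n : ℕ | ∃ E' : Multiset (Sym2 V), E' ≤ G.edges ∧
      Sparse k l (⟨G.verts, E'⟩ : MG V) ∧ Multiset.card E' = n} := by
  refine ⟨G.edges.card, ?_⟩
  rintro _ ⟨E', hE', -, rfl⟩
  exact Multiset.card_le_card hE'

variable {G : MG V}

theorem card_le_maxSparseCard {E' : Multiset (Sym2 V)} (hE' : E' ≤ G.edges)
    (hs : Sparse k l (⟨G.verts, E'⟩ : MG V)) : E'.card ≤ maxSparseCard k l G :=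
  le_csSup (bddAbove_sparse_card k l G) ⟨E', hE', hs, rfl⟩

theorem exists_sparse_card_eq_maxSparseCard (hk : 0 ≤ k) (hl : l ≤ 2 * k) (G : MG V) :
    ∃ E' ≤ G.edges, Sparse k l (⟨G.verts, E'⟩ : MG V) ∧ E'.card = maxSparseCard k l G :=
  Nat.sSup_mem (s := {n | ∃ E' ≤ G.edges, Sparse k l (⟨G.verts, E'⟩ : MG V) ∧ E'.card = n})
    ⟨0, 0, Multiset.zero_le _, sparse_edgeless hk hl _, rfl⟩ (bddAbove_sparse_card k l G)

theorem nred_eq_zero_iff_sparse (hk : 0 ≤ k) (hl : l ≤ 2 * k) :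
    nred k l G = 0 ↔ Sparse k l G := by
  refine Nat.sub_eq_zero_iff_le.trans ⟨fun hle => ?_, fun hs => card_le_maxSparseCard le_rfl hs⟩
  obtain ⟨E', hE', hs, hcard⟩ := exists_sparse_card_eq_maxSparseCard hk hl G
  obtain rfl : E' = G.edges := Multiset.eq_of_le_of_card_le hE' (hcard ▸ hle)
  exact hs

variable [DecidableEq V]

theorem induced_isSubgraph {S : Finset V} (hS : S ⊆ G.verts) : (G.induced S).IsSubgraph G :=
  ⟨hS, Multiset.filter_le _ _, fun _ he => (Multiset.mem_filter.1 he).2⟩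

theorem IsSubgraph.card_edges_le_induced {G' : MG V} (h : G'.IsSubgraph G) :
    G'.edges.card ≤ (G.induced G'.verts).edges.card :=
  Multiset.card_le_card (Multiset.le_filter.2 h.2)

theorem sparse_iff_forall_induced :
    Sparse k l G ↔
      ∀ S ⊆ G.verts, 1 < S.card → ((G.induced S).edges.card : ℤ) ≤ k * S.card - l := by
  refine ⟨fun h S hS hcard => h _ (induced_isSubgraph hS) hcard, fun h G' hG' hcard => ?_⟩
  calc (G'.edges.card : ℤ) ≤ (G.induced G'.verts).edges.card :=
        mod_cast hG'.card_edges_le_induced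
    _ ≤ k * G'.verts.card - l := h _ hG'.1 hcard

end Sparsity

section Cherry

variable {V : Type*}

/-- The cherry with centre `c`, leaves `a` and `b` and edge multiplicities `m` and `n`. Its vertex
set `S` is a separate argument, so that it may contain isolated vertices besides `c`, `a`, `b`.
The graph, its part `H` and its renormalization in the counterexample all have this shape. -/
def cherry (S : Finset V) (c a b : V) (m n : ℕ) : MG V :=
  ⟨S, Multiset.replicate m s(c, a) + Multiset.replicate n s(c, b)⟩

theorem card_edges_cherry (S : Finset V) (c a b : V) (m n : ℕ) :
    (cherry S c a b m n).edges.card = m + n := by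
  simp [cherry]

variable {S T : Finset V} {c a b d : V} {m n : ℕ}

theorem eq_or_eq_of_mem_edges_cherry {e : Sym2 V} (he : e ∈ (cherry S c a b m n).edges) :
    e = s(c, a) ∨ e = s(c, b) :=
  (Multiset.mem_add.1 he).imp Multiset.eq_of_mem_replicate Multiset.eq_of_mem_replicate

theorem center_mem_of_mem_edges_cherry {e : Sym2 V} (he : e ∈ (cherry S c a b m n).edges) :
    c ∈ e := by
  obtain rfl | rfl := eq_or_eq_of_mem_edges_cherry he <;> exact Sym2.mem_mk_left _ _

theorem wf_cherry (hca : c ≠ a) (hcb : c ≠ b) (hc : c ∈ S) (ha : a ∈ S) (hb : b ∈ S) :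
    (cherry S c a b m n).WF := by
  constructor <;> intro e he <;> obtain rfl | rfl := eq_or_eq_of_mem_edges_cherry he
  · exact hca
  · exact hcb
  · exact Finset.mk_mem_sym2_iff.2 ⟨hc, ha⟩
  · exact Finset.mk_mem_sym2_iff.2 ⟨hc, hb⟩

theorem induced_cherry [DecidableEq V] (S T : Finset V) (c a b : V) (m n : ℕ) :
    (cherry S c a b m n).induced T =
      cherry T c a b (if c ∈ T ∧ a ∈ T then m else 0) (if c ∈ T ∧ b ∈ T then n else 0) := by
  simp only [induced, cherry, Multiset.filter_add, multiset_filter_replicate,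
    Finset.mk_mem_sym2_iff]

theorem induced_cherry_of_notMem [DecidableEq V] (hc : c ∈ T) (ha : a ∈ T) (hb : b ∉ T) :
    (cherry S c a b m n).induced T = cherry T c a d m 0 := by
  rw [induced_cherry]
  simp [cherry, hc, ha, hb]

variable {k l : ℤ}

theorem sparse_cherry (hk : 0 ≤ k) (hca : c ≠ a) (hcb : c ≠ b) (hab : a ≠ b)
    (hm : m ≤ 2 * k - l) (hn : n ≤ 2 * k - l) (hmn : m + n ≤ 3 * k - l) :
    Sparse k l (cherry S c a b m n) := by
  classical
  simp only [sparse_iff_forall_induced, induced_cherry, card_edges_cherry]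
  intro T _ hT
  have two_le : 2 * k ≤ k * T.card := by nlinarith
  have three_le (hc : c ∈ T) (ha : a ∈ T) (hb : b ∈ T) : 3 * k ≤ k * T.card := by
    have : 2 < T.card := Finset.two_lt_card.2 ⟨c, hc, a, ha, b, hb, hca, hcb, hab⟩
    nlinarith
  split_ifs with hcaT hcbT
  · have := three_le hcaT.1 hcaT.2 hcbT.2
    push_cast
    linarith
  all_goals push_cast; linarith

variable [DecidableEq V]

theorem add_le_of_sparse_cherry (hca : c ≠ a) (hcb : c ≠ b) (hab : a ≠ b)
    (hS : {c, a, b} ⊆ S) (hs : Sparse k l (cherry S c a b m n)) :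
    m + n ≤ 3 * k - l := by
  have hcard : ({c, a, b} : Finset V).card = 3 := by simp [hca, hcb, hab]
  have h := sparse_iff_forall_induced.1 hs {c, a, b} hS (by simp [hcard])
  simpa [induced_cherry, card_edges_cherry, hcard, mul_comm k] using h

theorem rAB_cherry (hk : 0 ≤ k) (hca : c ≠ a) (hcb : c ≠ b) (hab : a ≠ b) (hkm : k ≤ m)
    (hs : Sparse k l (cherry {c, a, b} c a b m n)) :
    rAB k l (cherry {c, a, b} c a b m n) c b = m + n - 3 * k := by
  refine IsGreatest.csSup_eq ⟨⟨cherry {c, a, b} c a b m n, ?_, hs, ?_⟩, ?_⟩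
  · exact ⟨subset_rfl, le_rfl, (wf_cherry hca hcb (by simp) (by simp) (by simp)).2⟩
  · simp [cherry, hca, hcb, hab, mul_comm k]
  rintro _ ⟨h, hsub, -, hc, hb, rfl⟩
  have hedges := hsub.card_edges_le_induced
  rw [induced_cherry, card_edges_cherry] at hedges
  by_cases ha : a ∈ h.verts
  · have hverts : 2 < h.verts.card := Finset.two_lt_card.2 ⟨c, hc, a, ha, b, hb, hca, hcb, hab⟩
    simp only [hc, ha, hb, and_self, if_true] at hedges
    zify at hedges hverts
    nlinarith
  · have hverts : 1 < h.verts.card := Finset.one_lt_card.2 ⟨c, hc, b, hb, hcb⟩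
    simp only [hc, ha, hb, and_self, and_false, if_true, if_false, zero_add] at hedges
    zify at hedges hverts
    nlinarith

theorem MAB_cherry (hk : 0 ≤ k) (hca : c ≠ a) (hcb : c ≠ b) (hab : a ≠ b) (hkm : k ≤ m)
    (hs : Sparse k l (cherry {c, a, b} c a b m n)) :
    MAB k l (cherry {c, a, b} c a b m n) c b = m + n - k := by
  rw [MAB, rAB_cherry hk hca hcb hab hkm hs, max_eq_left] <;> linarith

theorem renormG_cherry (hc : c ∈ T) (ha : a ∈ T) (hb : b ∉ T) :
    renormG k l (cherry S c a b m n) T c d =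
      cherry (S \ T ∪ {c, d}) c b d n (MAB k l (cherry T c a d m 0) c d).toNat := by
  rw [renormG, induced_cherry_of_notMem (d := d) hc ha hb]
  simp [cherry, Multiset.filter_add, multiset_filter_replicate, hc, ha, hb]

end Cherry

end MG

open MG in
theorem nred_renorm_fails_two_one_general {V : Type*} [DecidableEq V] {k l : ℤ}
    (hl : 0 ≤ l) (hlk : l < k) {A B C D : V} (hABCD : [A, B, C, D].Nodup) :
    ∃ (G : MG V) (VH : Finset V),
      G.WF ∧ VH ⊆ G.verts ∧ A ∈ VH ∧ B ∈ VH ∧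
      RenormCond G VH A B ∧
      Sparse k l (G.induced VH) ∧ nred k l (G.induced VH) = 0 ∧
      nred k l G ≠ nred k l (renormG k l G VH A B) + nred k l (G.induced VH) := by
  obtain ⟨⟨hAB, hAC, hAD⟩, ⟨hBC, hBD⟩, hCD⟩ :
      (A ≠ B ∧ A ≠ C ∧ A ≠ D) ∧ (B ≠ C ∧ B ≠ D) ∧ C ≠ D := by
    simpa using hABCD
  obtain ⟨m, hm⟩ : ∃ m : ℕ, 2 * k - l = m := Int.eq_ofNat_of_zero_le (by linarith)
  obtain ⟨n, hn⟩ : ∃ n : ℕ, k - l = n := Int.eq_ofNat_of_zero_le (by linarith)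
  have nred_eq_zero {G : MG V} : nred k l G = 0 ↔ Sparse k l G :=
    nred_eq_zero_iff_sparse (by linarith) (by linarith)
  let G := cherry {A, C, B, D} A C D m m
  have G_not_sparse : ¬ Sparse k l G := fun hs => by
    have := add_le_of_sparse_cherry hAC hAD hCD (by grind) hs
    linarith
  have cherry_sparse : Sparse k l (cherry {A, C, B} A C B m 0) := by
    apply sparse_cherry <;> grind
  have MAB_eq : MAB k l (cherry {A, C, B} A C B m 0) A B = n := by
    rw [MAB_cherry] <;> grind
  have R_sparse : Sparse k l (renormG k l G {A, C, B} A B) := by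
    rw [renormG_cherry (by simp) (by simp) (by grind), MAB_eq, Int.toNat_natCast]
    apply sparse_cherry <;> grind
  have H_sparse : Sparse k l (G.induced {A, C, B}) := by
    rwa [induced_cherry_of_notMem (by simp) (by simp) (by grind)]
  have formula_fails : nred k l G ≠
      nred k l (renormG k l G {A, C, B} A B) + nred k l (G.induced {A, C, B}) := by
    rwa [nred_eq_zero.2 R_sparse, nred_eq_zero.2 H_sparse, ne_eq, nred_eq_zero]
  have G_wf : G.WF := wf_cherry hAC hAD (by simp) (by simp) (by simp)
  have renormCond : RenormCond G {A, C, B} A B := fun e he _ _ =>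
    .inl (center_mem_of_mem_edges_cherry he)
  exact ⟨G, {A, C, B}, G_wf, by grind [cherry], by simp, by simp, renormCond, H_sparse,
    nred_eq_zero.2 H_sparse, formula_fails⟩

/-- for `(k,l) = (2,1)` the renormalization formula for redundant edges
fails: there are a multigraph `G`, a vertex subset `V_H` with distinct `A, B ∈ V_H` such
that the induced subgraph `H` satisfies the renormalizability condition and is
`(2,1)`-sparse (so `n_red(H) = 0`), yet `n_red(G) ≠ n_red(R(G)) + n_red(H)`. -/
theorem nred_renorm_fails_two_one :
    ∃ (G : MG ℕ) (VH : Finset ℕ) (A B : ℕ),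
      G.WF ∧ VH ⊆ G.verts ∧ A ∈ VH ∧ B ∈ VH ∧ A ≠ B ∧
      MG.RenormCond G VH A B ∧
      MG.Sparse 2 1 (G.induced VH) ∧ MG.nred 2 1 (G.induced VH) = 0 ∧
      MG.nred 2 1 G ≠
        MG.nred 2 1 (MG.renormG 2 1 G VH A B) + MG.nred 2 1 (G.induced VH) := by
  obtain ⟨G, VH, hG, hVH, hA, hB, h⟩ := nred_renorm_fails_two_one_general (k := 2) (l := 1)
    (by decide) (by decide) (show [0, 1, 2, 3].Nodup by decide)
  exact ⟨G, VH, 0, 1, hG, hVH, hA, hB, zero_ne_one, h⟩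
end
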